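/- Let N ≥ 3, α ∈ (0,N), p ∈ [1, (N+α)/(N−2)], and let {uₙ} be bounded in L^{2Np/(N+α)}(ℝᴺ) with uₙ → u almost everywhere on ℝᴺ. Then ∫(I_α*|uₙ|^p)|uₙ|^p − ∫(I_α*|uₙ−u|^p)|uₙ−u|^p → ∫(I_α*|u|^p)|u|^p (Brezis–Lieb lemma for the Riesz potential energy). -/

import Mathlib

open MeasureTheory Filter

/-- The normalization constant `C̄` of the Riesz potential `I_α`. -/
noncomputable def rieszConst (N : ℕ) (α : ℝ) : ℝ :=
  Real.Gamma (((N:ℝ) - α) / 2) / (Real.Gamma (α / 2) * Real.pi ^ ((N:ℝ) / 2) * 2 ^ α)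

/-- The Riesz potential energy `∫ (I_α * |u|^p) |u|^p`. -/
noncomputable def nonlocalB (N : ℕ) (α p : ℝ) (u : EuclideanSpace ℝ (Fin N) → ℝ) : ℝ :=
  ∫ x : EuclideanSpace ℝ (Fin N), ∫ y : EuclideanSpace ℝ (Fin N),
    rieszConst N α * |u x| ^ p * |u y| ^ p * ‖x - y‖ ^ (α - (N:ℝ))

/-!
Write `A n = |u n| ^ p`, `B n = |u n - u₀| ^ p`, `C = |u₀| ^ p`, and let `q = 2 d / (d + α)`. The
Brezis-Lieb argument gives `D n = A n - B n - C → 0` in `L^q`: pointwise `|D n| ≤ ε B n + C_ε C`, so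
the part of `|D n|` exceeding `ε B n` is dominated by `C_ε C`. Expanding the energy bilinearly,
`(A n, A n) - (B n, B n) - (C, C) = (D n, A n) + (B n + C, D n) + (B n, C) + (C, B n)`.
The energy is bounded on `L^q × L^q`, which kills the terms with `D n`; the last two vanish because
the potential of `C` lies in the dual space `L^q'`, while `B n` is bounded in `L^q` and tends to `0`
almost everywhere.

The boundedness is the diagonal Hardy-Littlewood-Sobolev inequality. Since
`(f, g) ≤ (f + g, f + g)` for nonnegative `f` and `g`, it is enough to bound the form at `(f, f)`
when `‖f‖_q ≤ 1`, and by symmetry one of the factors `f x`, `f y` may be replaced by their minimum,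
at the price of a factor `2`. For each `x`, bound that minimum by `f x` for `y` in a ball around `x`
and by `f y` outside it, where Hölder's inequality applies; optimizing the radius gives
`f x * ∫ min (f x) (f y) ‖x - y‖ ^ (α - d) dy ≤ K f x ^ q`, whose integral is at most `K`.
-/

open scoped ENNReal NNReal Pointwise Topology

section BrezisLieb

variable {X : Type*} [MeasurableSpace X] {μ : Measure X} {r : ℝ≥0∞}

theorem tendsto_eLpNorm_zero_of_dominated (hr0 : r ≠ 0) (hr : r ≠ ⊤) {F : ℕ → X → ℝ≥0∞}
    {G : X → ℝ≥0∞} (hF : ∀ n, AEMeasurable (F n) μ) (hG : eLpNorm G r μ ≠ ⊤)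
    (hle : ∀ n x, F n x ≤ G x) (hlim : ∀ᵐ x ∂μ, Tendsto (fun n => F n x) atTop (𝓝 0)) :
    Tendsto (fun n => eLpNorm (F n) r μ) atTop (𝓝 0) := by
  have hr_pos : 0 < r.toReal := ENNReal.toReal_pos hr0 hr
  have hG_int : ∫⁻ x, G x ^ r.toReal ∂μ ≠ ⊤ := by
    simpa using (lintegral_rpow_enorm_lt_top_of_eLpNorm_lt_top hr0 hr hG.lt_top).ne
  have hint : Tendsto (fun n => ∫⁻ x, F n x ^ r.toReal ∂μ) atTop (𝓝 0) := by
    have := tendsto_lintegral_of_dominated_convergence' (f := fun _ => 0)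
      (fun x => G x ^ r.toReal) (fun n => (hF n).pow_const r.toReal)
      (fun n => ae_of_all _ fun x => ENNReal.rpow_le_rpow (hle n x) hr_pos.le) hG_int <| by
        filter_upwards [hlim] with x hx
        exact (ENNReal.continuous_rpow_const.tendsto' _ _ (ENNReal.zero_rpow_of_pos hr_pos)).comp hx
    simpa using this
  simp only [eLpNorm_eq_lintegral_rpow_enorm_toReal hr0 hr, enorm_eq_self]
  exact (ENNReal.continuous_rpow_const.tendsto' _ _
    (ENNReal.zero_rpow_of_pos (one_div_pos.2 hr_pos))).comp hint

theorem eLpNorm_ennreal_smul_le {c : ℝ≥0∞} (hc : c ≠ ⊤) (f : X → ℝ≥0∞) :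
    eLpNorm (c • f) r μ ≤ c * eLpNorm f r μ := by
  lift c to ℝ≥0 using hc
  exact eLpNorm_le_nnreal_smul_eLpNorm_of_ae_le_mul' (ae_of_all _ fun x => by simp) r

theorem tendsto_eLpNorm_zero_of_le_smul_add (hr1 : 1 ≤ r) (hr : r ≠ ⊤) {F H : ℕ → X → ℝ≥0∞}
    {M : ℝ≥0∞} (hF : ∀ n, AEMeasurable (F n) μ) (hH : ∀ n, AEMeasurable (H n) μ) (hM : M ≠ ⊤)
    (hHM : ∀ n, eLpNorm (H n) r μ ≤ M)
    (hlim : ∀ᵐ x ∂μ, Tendsto (fun n => F n x) atTop (𝓝 0))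
    (hle : ∀ ε : ℝ≥0, 0 < ε → ∃ G : X → ℝ≥0∞, AEMeasurable G μ ∧ eLpNorm G r μ ≠ ⊤ ∧
      ∀ n x, F n x ≤ ε * H n x + G x) :
    Tendsto (fun n => eLpNorm (F n) r μ) atTop (𝓝 0) := by
  rw [ENNReal.tendsto_nhds_zero]
  intro δ hδ
  have hδ2 : 0 < δ / 2 := ENNReal.half_pos hδ.ne'
  obtain ⟨ε, hε, hεM⟩ := ENNReal.exists_nnreal_pos_mul_lt hM hδ2.ne'
  obtain ⟨G, hG_meas, hG, hFG⟩ := hle ε hε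
  have hmin : Tendsto (fun n => eLpNorm (fun x => min (F n x) (G x)) r μ) atTop (𝓝 0) := by
    refine tendsto_eLpNorm_zero_of_dominated (one_pos.trans_le hr1).ne' hr
      (fun n => (hF n).inf hG_meas) hG (fun n x => min_le_right _ _) ?_
    filter_upwards [hlim] with x hx
    exact tendsto_of_tendsto_of_tendsto_of_le_of_le tendsto_const_nhds hx
      (fun n => zero_le) (fun n => min_le_left _ _)
  have hsplit (n : ℕ) (x : X) : F n x ≤ min (F n x) (G x) + ε * H n x := by
    rcases le_total (F n x) (G x) with h | h
    · simp [min_eq_left h]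
    · simpa only [min_eq_right h, add_comm] using hFG n x
  filter_upwards [ENNReal.tendsto_nhds_zero.1 hmin (δ / 2) hδ2] with n hn
  calc eLpNorm (F n) r μ
      ≤ eLpNorm ((fun x => min (F n x) (G x)) + (ε : ℝ≥0∞) • H n) r μ :=
        eLpNorm_mono_enorm fun x => by simpa using hsplit n x
    _ ≤ eLpNorm (fun x => min (F n x) (G x)) r μ + eLpNorm ((ε : ℝ≥0∞) • H n) r μ :=
        eLpNorm_add_le ((hF n).inf hG_meas).aestronglyMeasurable
          ((hH n).const_mul (ε : ℝ≥0∞)).aestronglyMeasurable hr1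
    _ ≤ δ / 2 + δ / 2 := by
        gcongr
        exact (eLpNorm_ennreal_smul_le ENNReal.coe_ne_top _).trans <|
          (mul_le_mul_right (hHM n) _).trans hεM.le
    _ = δ := ENNReal.add_halves δ

theorem exists_abs_rpow_sub_rpow_le {p ε : ℝ} (hp : 0 < p) (hε : 0 < ε) :
    ∃ C : ℝ≥0, ∀ s t : ℝ, 0 ≤ s → 0 ≤ t → |s ^ p - t ^ p| ≤ ε * t ^ p + C * |s - t| ^ p := by
  obtain ⟨δ, hδ, hclose⟩ : ∃ δ > 0, ∀ r : ℝ, |r - 1| < δ → |r ^ p - 1| < ε := by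
    simpa [Real.dist_eq] using
      Metric.continuousAt_iff.1 (Real.continuousAt_rpow_const 1 p (by simp)) ε hε
  refine ⟨⟨(1 + δ⁻¹) ^ p, by positivity⟩, fun s t hs ht => ?_⟩
  change _ ≤ _ + (1 + δ⁻¹) ^ p * |s - t| ^ p
  rcases lt_or_ge |s - t| (δ * t) with h | h
  · have ht0 : 0 < t := by
      by_contra! ht0
      nlinarith [abs_nonneg (s - t)]
    have hratio : |s / t - 1| < δ := by
      rwa [div_sub_one ht0.ne', abs_div, abs_of_pos ht0, div_lt_iff₀ ht0]
    have hscale : |s ^ p - t ^ p| = |(s / t) ^ p - 1| * t ^ p := by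
      rw [Real.div_rpow hs ht, div_sub_one (Real.rpow_pos_of_pos ht0 p).ne', abs_div,
        abs_of_pos (Real.rpow_pos_of_pos ht0 p), div_mul_cancel₀ _ (by positivity)]
    rw [hscale]
    have := hclose _ hratio
    nlinarith [Real.rpow_nonneg ht p, show 0 ≤ (1 + δ⁻¹) ^ p * |s - t| ^ p by positivity]
  · have ht_le : t ≤ δ⁻¹ * |s - t| := by rwa [le_inv_mul_iff₀ hδ]
    have hs_le : s ≤ (1 + δ⁻¹) * |s - t| := by linarith [le_abs_self (s - t)]
    have ht_le' : t ≤ (1 + δ⁻¹) * |s - t| := by linarith [abs_nonneg (s - t)]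
    calc |s ^ p - t ^ p| ≤ ((1 + δ⁻¹) * |s - t|) ^ p :=
          abs_sub_le_of_nonneg_of_le (by positivity) (by gcongr) (by positivity) (by gcongr)
      _ = (1 + δ⁻¹) ^ p * |s - t| ^ p := by rw [Real.mul_rpow (by positivity) (abs_nonneg _)]
      _ ≤ _ := le_add_of_nonneg_left (by positivity)

theorem exists_abs_norm_rpow_sub_le (F : Type*) [SeminormedAddCommGroup F] {p ε : ℝ} (hp : 0 < p)
    (hε : 0 < ε) :
    ∃ C : ℝ≥0, ∀ a b : F,
      |‖a‖ ^ p - ‖a - b‖ ^ p - ‖b‖ ^ p| ≤ ε * ‖a - b‖ ^ p + C * ‖b‖ ^ p := by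
  obtain ⟨C, hC⟩ := exists_abs_rpow_sub_rpow_le hp hε
  refine ⟨C + 1, fun a b => ?_⟩
  have hnorm : |‖a‖ - ‖a - b‖| ≤ ‖b‖ := by simpa using abs_norm_sub_norm_le a (a - b)
  calc |‖a‖ ^ p - ‖a - b‖ ^ p - ‖b‖ ^ p|
      ≤ |‖a‖ ^ p - ‖a - b‖ ^ p| + |‖b‖ ^ p| := abs_sub _ _
    _ ≤ (ε * ‖a - b‖ ^ p + C * ‖b‖ ^ p) + ‖b‖ ^ p := by
        rw [abs_of_nonneg (show 0 ≤ ‖b‖ ^ p by positivity)]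
        gcongr
        exact (hC _ _ (norm_nonneg _) (norm_nonneg _)).trans (by gcongr)
    _ = ε * ‖a - b‖ ^ p + (C + 1 : ℝ≥0) * ‖b‖ ^ p := by push_cast; ring

variable {F : Type*} [NormedAddCommGroup F] {u : ℕ → X → F} {u₀ : X → F} {M : ℝ≥0∞}

theorem eLpNorm_le_of_ae_tendsto (hu : ∀ n, AEStronglyMeasurable (u n) μ)
    (hM : ∀ n, eLpNorm (u n) r μ ≤ M)
    (hlim : ∀ᵐ x ∂μ, Tendsto (fun n => u n x) atTop (𝓝 (u₀ x))) : eLpNorm u₀ r μ ≤ M :=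
  (Lp.eLpNorm_lim_le_liminf_eLpNorm hu u₀ hlim).trans <|
    liminf_le_of_frequently_le' (Frequently.of_forall hM)

theorem exists_eLpNorm_sub_le_of_ae_tendsto (hu : ∀ n, AEStronglyMeasurable (u n) μ) (hM : M ≠ ⊤)
    (huM : ∀ n, eLpNorm (u n) r μ ≤ M)
    (hlim : ∀ᵐ x ∂μ, Tendsto (fun n => u n x) atTop (𝓝 (u₀ x))) :
    ∃ M' ≠ ⊤, ∀ n, eLpNorm (u n - u₀) r μ ≤ M' := by
  have hu₀ : AEStronglyMeasurable u₀ μ := aestronglyMeasurable_of_tendsto_ae _ hu hlim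
  have hu₀M : eLpNorm u₀ r μ ≤ M := eLpNorm_le_of_ae_tendsto hu huM hlim
  refine ⟨r.LpAddConst * (M + M),
    ENNReal.mul_ne_top (ENNReal.LpAddConst_lt_top r).ne (by finiteness), fun n => ?_⟩
  grw [eLpNorm_sub_le' (hu n) hu₀ r, huM n, hu₀M]

theorem aestronglyMeasurable_norm_rpow {v : X → F} (hv : AEStronglyMeasurable v μ) (p : ℝ) :
    AEStronglyMeasurable (fun x => ‖v x‖ ^ p) μ :=
  (hv.norm.aemeasurable.pow_const p).aestronglyMeasurable

theorem tendsto_eLpNorm_norm_rpow_sub {p : ℝ} (hp : 0 < p) (hr1 : 1 ≤ r) (hr : r ≠ ⊤)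
    (hu : ∀ n, AEStronglyMeasurable (u n) μ) (hM : M ≠ ⊤)
    (hsub : ∀ n, eLpNorm (fun x => ‖u n x - u₀ x‖ ^ p) r μ ≤ M)
    (hu₀ : eLpNorm (fun x => ‖u₀ x‖ ^ p) r μ ≠ ⊤)
    (hlim : ∀ᵐ x ∂μ, Tendsto (fun n => u n x) atTop (𝓝 (u₀ x))) :
    Tendsto (fun n => eLpNorm (fun x => ‖u n x‖ ^ p - ‖u n x - u₀ x‖ ^ p - ‖u₀ x‖ ^ p) r μ)
      atTop (𝓝 0) := by
  have hu₀_meas : AEStronglyMeasurable u₀ μ := aestronglyMeasurable_of_tendsto_ae _ hu hlim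
  have hpow_meas (n : ℕ) := aestronglyMeasurable_norm_rpow (hu n) p
  have hsub_meas (n : ℕ) := aestronglyMeasurable_norm_rpow ((hu n).sub hu₀_meas) p
  have hpow₀_meas := aestronglyMeasurable_norm_rpow hu₀_meas p
  refine Tendsto.congr (fun n => eLpNorm_enorm _) <|
    tendsto_eLpNorm_zero_of_le_smul_add (H := fun n x => ‖‖u n x - u₀ x‖ ^ p‖ₑ) hr1 hr
      (fun n => ((hpow_meas n).sub (hsub_meas n) |>.sub hpow₀_meas).enorm)
      (fun n => (hsub_meas n).enorm) hM (fun n => (eLpNorm_enorm _).trans_le (hsub n)) ?_ ?_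
  · filter_upwards [hlim] with x hx
    have hpow_lim : Tendsto (fun n => ‖u n x‖ ^ p - ‖u n x - u₀ x‖ ^ p - ‖u₀ x‖ ^ p) atTop
        (𝓝 (‖u₀ x‖ ^ p - ‖u₀ x - u₀ x‖ ^ p - ‖u₀ x‖ ^ p)) :=
      ((hx.norm.rpow_const (.inr hp.le)).sub
        ((hx.sub_const _).norm.rpow_const (.inr hp.le))).sub_const _
    simpa [Real.zero_rpow hp.ne'] using hpow_lim.enorm
  · intro ε hε
    obtain ⟨C, hC⟩ := exists_abs_norm_rpow_sub_le F hp (NNReal.coe_pos.2 hε)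
    refine ⟨fun x => ‖(C : ℝ) * ‖u₀ x‖ ^ p‖ₑ, (hpow₀_meas.const_mul _).enorm, ?_, fun n x => ?_⟩
    · rw [eLpNorm_enorm]
      exact (MemLp.const_mul ⟨hpow₀_meas, hu₀.lt_top⟩ (C : ℝ)).2.ne
    · simp only [Real.enorm_eq_ofReal_abs, abs_mul, NNReal.abs_eq, Real.abs_rpow_of_nonneg,
        abs_norm, norm_nonneg]
      rw [← ENNReal.ofReal_coe_nnreal, ← ENNReal.ofReal_mul ε.coe_nonneg,
        ← ENNReal.ofReal_add (by positivity) (by positivity)]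
      exact ENNReal.ofReal_le_ofReal (hC (u n x) (u₀ x))

end BrezisLieb

section Duality

variable {X : Type*} [MeasurableSpace X] {μ : Measure X} {q q' : ℝ}

theorem eLpNorm_ofReal_eq_lintegral (hq : 0 < q) (f : X → ℝ≥0∞) :
    eLpNorm f (ENNReal.ofReal q) μ = (∫⁻ x, f x ^ q ∂μ) ^ (1 / q) := by
  rw [eLpNorm_eq_lintegral_rpow_enorm_toReal (by simpa) (by simp), ENNReal.toReal_ofReal hq.le]
  simp

theorem exists_le_lintegral_ne_top_of_lt_lintegral [SigmaFinite μ] {f : X → ℝ≥0∞} {L : ℝ≥0∞}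
    (hL : L < ∫⁻ x, f x ∂μ) :
    ∃ g : X → ℝ≥0∞, Measurable g ∧ (∀ x, g x ≤ f x) ∧ ∫⁻ x, g x ∂μ ≠ ⊤ ∧ L < ∫⁻ x, g x ∂μ := by
  rw [lintegral_eq_nnreal] at hL
  obtain ⟨φ, hφf, hφL⟩ := by simpa only [lt_iSup_iff, exists_prop] using hL
  rw [← SimpleFunc.lintegral_eq_lintegral] at hφL
  obtain ⟨g, hgφ, hg, hgL⟩ := SimpleFunc.exists_lt_lintegral_simpleFunc_of_lt_lintegral hφL
  exact ⟨fun x => g x, g.measurable.coe_nnreal_ennreal,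
    fun x => (ENNReal.coe_le_coe.2 (hgφ x)).trans (hφf x), hg.ne, hgL⟩

theorem eLpNorm_le_of_forall_lintegral_mul_le [SigmaFinite μ] (hpq : q.HolderConjugate q')
    {h : X → ℝ≥0∞} {C : ℝ≥0∞} (hC : ∀ g : X → ℝ≥0∞, Measurable g →
      ∫⁻ x, g x * h x ∂μ ≤ C * eLpNorm g (ENNReal.ofReal q) μ) :
    eLpNorm h (ENNReal.ofReal q') μ ≤ C := by
  have hq := hpq.pos
  have hq' := hpq.symm.pos
  rw [eLpNorm_ofReal_eq_lintegral hq', one_div, ENNReal.rpow_inv_le_iff hq']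
  refine le_of_forall_lt fun L hL => ?_
  obtain ⟨ψ, hψ_meas, hψh, hψ, hLψ⟩ := exists_le_lintegral_ne_top_of_lt_lintegral hL
  refine hLψ.trans_le ?_
  set T := ∫⁻ x, ψ x ∂μ
  have hT0 : T ≠ 0 := (bot_le.trans_lt hLψ).ne'
  have hsplit (S : ℝ≥0∞) : S ^ q⁻¹ * S ^ q'⁻¹ = S := by
    rw [← ENNReal.rpow_add_of_nonneg _ _ (by positivity) (by positivity),
      hpq.inv_add_inv_eq_one, ENNReal.rpow_one]
  -- Duality is saturated by testing against `ψ ^ (1 / q)`.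
  have htest : T ≤ C * T ^ q⁻¹ :=
    calc T = ∫⁻ x, ψ x ^ q⁻¹ * ψ x ^ q'⁻¹ ∂μ := lintegral_congr fun x => (hsplit _).symm
      _ ≤ ∫⁻ x, ψ x ^ q⁻¹ * h x ∂μ := by
          refine lintegral_mono fun x => mul_le_mul_right ?_ _
          exact (ENNReal.rpow_inv_le_iff hq').2 (hψh x)
      _ ≤ C * T ^ q⁻¹ := by
          refine (hC _ (hψ_meas.pow_const _)).trans_eq ?_
          simp only [eLpNorm_ofReal_eq_lintegral hq, ENNReal.rpow_inv_rpow hq.ne', one_div, T]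
  rw [← ENNReal.rpow_inv_le_iff hq']
  refine (ENNReal.mul_le_mul_iff_right (a := T ^ q⁻¹) ?_ ?_).1 ?_
  · simp [hT0, hψ, T]
  · exact ENNReal.rpow_ne_top_of_nonneg (by positivity) hψ
  · rwa [hsplit, mul_comm]

theorem exists_mul_le_mul_rpow_add (hpq : q.HolderConjugate q') {ε : ℝ≥0} (hε : 0 < ε) :
    ∃ C : ℝ≥0, ∀ a b : ℝ≥0∞, a * b ≤ ε * a ^ q + C * b ^ q' := by
  have hq := hpq.pos
  have hq' := hpq.symm.pos
  set t : ℝ≥0 := ε ^ q⁻¹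
  have ht : t ≠ 0 := (NNReal.rpow_pos hε).ne'
  refine ⟨t⁻¹ ^ q', fun a b => ?_⟩
  calc a * b = (t * a) * ((t⁻¹ : ℝ≥0) * b) := by
        rw [mul_mul_mul_comm, ← ENNReal.coe_mul, mul_inv_cancel₀ ht, ENNReal.coe_one, one_mul]
    _ ≤ (t * a) ^ q / ENNReal.ofReal q + ((t⁻¹ : ℝ≥0) * b) ^ q' / ENNReal.ofReal q' :=
        ENNReal.young_inequality _ _ hpq
    _ ≤ (t * a) ^ q + ((t⁻¹ : ℝ≥0) * b) ^ q' := by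
        gcongr
        · exact ENNReal.div_le_of_le_mul
            (le_mul_of_one_le_right' (ENNReal.one_le_ofReal.2 hpq.lt.le))
        · exact ENNReal.div_le_of_le_mul
            (le_mul_of_one_le_right' (ENNReal.one_le_ofReal.2 hpq.symm.lt.le))
    _ = ε * a ^ q + (t⁻¹ ^ q' : ℝ≥0) * b ^ q' := by
        rw [ENNReal.mul_rpow_of_nonneg _ _ hq.le, ENNReal.mul_rpow_of_nonneg _ _ hq'.le,
          ← ENNReal.coe_rpow_of_nonneg _ hq.le, ← ENNReal.coe_rpow_of_nonneg _ hq'.le,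
          NNReal.rpow_inv_rpow hq.ne']

theorem tendsto_lintegral_mul_zero_of_ae_tendsto (hpq : q.HolderConjugate q') {f : ℕ → X → ℝ≥0∞}
    {φ : X → ℝ≥0∞} {M : ℝ≥0∞} (hf : ∀ n, AEMeasurable (f n) μ) (hφ : AEMeasurable φ μ) (hM : M ≠ ⊤)
    (hfM : ∀ n, eLpNorm (f n) (ENNReal.ofReal q) μ ≤ M)
    (hφq : eLpNorm φ (ENNReal.ofReal q') μ ≠ ⊤)
    (hlim : ∀ᵐ x ∂μ, Tendsto (fun n => f n x) atTop (𝓝 0)) :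
    Tendsto (fun n => ∫⁻ x, f n x * φ x ∂μ) atTop (𝓝 0) := by
  have hq := hpq.pos
  have hq' := hpq.symm.pos
  simp only [eLpNorm_ofReal_eq_lintegral hq, eLpNorm_ofReal_eq_lintegral hq', one_div,
    ENNReal.rpow_inv_le_iff hq] at hfM hφq
  have hφ_int : ∫⁻ x, φ x ^ q' ∂μ ≠ ⊤ := fun h => hφq (by simp [h, hq'])
  have hφ_fin : ∀ᵐ x ∂μ, φ x ≠ ⊤ := by
    filter_upwards [ae_lt_top' (hφ.pow_const q') hφ_int] with x hx hx_top
    simp [hx_top, hq'] at hx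
  suffices Tendsto (fun n => eLpNorm (fun x => f n x * φ x) 1 μ) atTop (𝓝 0) by
    simpa [eLpNorm_one_eq_lintegral_enorm] using this
  refine tendsto_eLpNorm_zero_of_le_smul_add (H := fun n x => f n x ^ q) (M := M ^ q) le_rfl
    ENNReal.one_ne_top (fun n => (hf n).mul hφ) (fun n => (hf n).pow_const q) (by finiteness)
    (fun n => by simpa [eLpNorm_one_eq_lintegral_enorm] using hfM n) ?_ fun ε hε => ?_
  · filter_upwards [hlim, hφ_fin] with x hx hφx
    simpa using ENNReal.Tendsto.mul_const hx (.inr hφx)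
  · obtain ⟨C, hC⟩ := exists_mul_le_mul_rpow_add hpq hε
    refine ⟨fun x => C * φ x ^ q', (hφ.pow_const q').const_mul _, ?_, fun n x => hC _ _⟩
    simp only [eLpNorm_one_eq_lintegral_enorm, enorm_eq_self]
    rw [lintegral_const_mul' _ _ ENNReal.coe_ne_top]
    exact ENNReal.mul_ne_top ENNReal.coe_ne_top hφ_int

end Duality

section KernelPairing

variable {X : Type*} [MeasurableSpace X] {μ : Measure X}

/-- The bilinear form `(f, g) ↦ ∬ f(x) g(y) K(x, y)` of a nonnegative kernel `K`, on `[0, ∞]`-valued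
functions. -/
noncomputable def kernelPairing (μ : Measure X) (K : X × X → ℝ≥0∞) (f g : X → ℝ≥0∞) : ℝ≥0∞ :=
  ∫⁻ z, f z.1 * g z.2 * K z ∂μ.prod μ

/-- Boundedness of `kernelPairing μ K` on `L^q × L^q`. -/
def HasBoundedPairing (μ : Measure X) (K : X × X → ℝ≥0∞) (q : ℝ) : Prop :=
  ∃ C : ℝ≥0, ∀ f g : X → ℝ≥0∞, AEMeasurable f μ → AEMeasurable g μ → kernelPairing μ K f g ≤
    C * (eLpNorm f (ENNReal.ofReal q) μ * eLpNorm g (ENNReal.ofReal q) μ)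

variable {K : X × X → ℝ≥0∞} {f g : X → ℝ≥0∞} {q q' : ℝ}

theorem HasBoundedPairing.tendsto_zero_of_tendsto_eLpNorm {F G : ℕ → X → ℝ≥0∞} {M : ℝ≥0∞}
    (hK : HasBoundedPairing μ K q) (hF : ∀ n, AEMeasurable (F n) μ) (hG : ∀ n, AEMeasurable (G n) μ)
    (hM : M ≠ ⊤) (hGM : ∀ n, eLpNorm (G n) (ENNReal.ofReal q) μ ≤ M)
    (hlim : Tendsto (fun n => eLpNorm (F n) (ENNReal.ofReal q) μ) atTop (𝓝 0)) :
    Tendsto (fun n => kernelPairing μ K (F n) (G n)) atTop (𝓝 0) := by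
  obtain ⟨C, hC⟩ := hK
  have hbound : Tendsto (fun n => C * (eLpNorm (F n) (ENNReal.ofReal q) μ * M)) atTop (𝓝 0) := by
    simpa using ENNReal.Tendsto.const_mul (ENNReal.Tendsto.mul_const hlim (.inr hM))
      (.inr ENNReal.coe_ne_top)
  refine tendsto_of_tendsto_of_tendsto_of_le_of_le tendsto_const_nhds hbound (fun n => zero_le)
    fun n => (hC _ _ (hF n) (hG n)).trans ?_
  gcongr
  exact hGM n

variable [SigmaFinite μ]

theorem kernelPairing_comp_swap (K : X × X → ℝ≥0∞) (f g : X → ℝ≥0∞) :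
    kernelPairing μ (K ∘ Prod.swap) f g = kernelPairing μ K g f := by
  rw [kernelPairing, kernelPairing, ← lintegral_prod_swap]
  simp only [Function.comp_apply, Prod.swap_swap, Prod.fst_swap, Prod.snd_swap, mul_comm (f _)]

theorem HasBoundedPairing.comp_swap (hK : HasBoundedPairing μ K q) :
    HasBoundedPairing μ (K ∘ Prod.swap) q := by
  obtain ⟨C, hC⟩ := hK
  refine ⟨C, fun f g hf hg => ?_⟩
  rw [kernelPairing_comp_swap, mul_comm (eLpNorm f _ _)]
  exact hC g f hg hf

theorem aemeasurable_lintegral_mul_kernel (hK : AEMeasurable K (μ.prod μ))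
    (hg : AEMeasurable g μ) : AEMeasurable (fun x => ∫⁻ y, g y * K (x, y) ∂μ) μ :=
  (hg.comp_snd.mul hK).lintegral_prod_right'

theorem kernelPairing_eq_lintegral_mul (hK : AEMeasurable K (μ.prod μ)) (hf : AEMeasurable f μ)
    (hg : AEMeasurable g μ) :
    kernelPairing μ K f g = ∫⁻ x, f x * ∫⁻ y, g y * K (x, y) ∂μ ∂μ := by
  have hmeas : AEMeasurable (fun z => f z.1 * g z.2 * K z) (μ.prod μ) :=
    (hf.comp_fst.mul hg.comp_snd).mul hK
  rw [kernelPairing, lintegral_prod _ hmeas]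
  have hsection : ∀ᵐ x ∂μ, AEMeasurable (fun y => g y * K (x, y)) μ := by
    filter_upwards [hK.aestronglyMeasurable.prodMk_left] with x hx
    exact hg.mul hx.aemeasurable
  refine lintegral_congr_ae ?_
  filter_upwards [hsection] with x hx
  simp only [mul_assoc, lintegral_const_mul'' _ hx]

theorem HasBoundedPairing.exists_eLpNorm_lintegral_le (hK : HasBoundedPairing μ K q)
    (hK_meas : AEMeasurable K (μ.prod μ)) (hpq : q.HolderConjugate q') :
    ∃ C : ℝ≥0, ∀ g : X → ℝ≥0∞, AEMeasurable g μ →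
      eLpNorm (fun x => ∫⁻ y, g y * K (x, y) ∂μ) (ENNReal.ofReal q') μ ≤
        C * eLpNorm g (ENNReal.ofReal q) μ := by
  obtain ⟨C, hC⟩ := hK
  refine ⟨C, fun g hg => eLpNorm_le_of_forall_lintegral_mul_le hpq fun f hf => ?_⟩
  rw [← kernelPairing_eq_lintegral_mul hK_meas hf.aemeasurable hg, mul_right_comm, mul_assoc]
  exact hC f g hf.aemeasurable hg

theorem HasBoundedPairing.tendsto_zero_of_ae_tendsto {F : ℕ → X → ℝ≥0∞} {M : ℝ≥0∞}
    (hK : HasBoundedPairing μ K q)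
    (hK_meas : AEMeasurable K (μ.prod μ)) (hpq : q.HolderConjugate q')
    (hF : ∀ n, AEMeasurable (F n) μ) (hg : AEMeasurable g μ) (hM : M ≠ ⊤)
    (hFM : ∀ n, eLpNorm (F n) (ENNReal.ofReal q) μ ≤ M)
    (hgq : eLpNorm g (ENNReal.ofReal q) μ ≠ ⊤)
    (hlim : ∀ᵐ x ∂μ, Tendsto (fun n => F n x) atTop (𝓝 0)) :
    Tendsto (fun n => kernelPairing μ K (F n) g) atTop (𝓝 0) := by
  obtain ⟨C, hC⟩ := hK.exists_eLpNorm_lintegral_le hK_meas hpq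
  simp only [kernelPairing_eq_lintegral_mul hK_meas (hF _) hg]
  exact tendsto_lintegral_mul_zero_of_ae_tendsto hpq hF
    (aemeasurable_lintegral_mul_kernel hK_meas hg) hM hFM
    (ne_top_of_le_ne_top (ENNReal.mul_ne_top ENNReal.coe_ne_top hgq) (hC g hg)) hlim

end KernelPairing

section KernelDensity

variable {X : Type*} {k : X × X → ℝ}

/-- The integrand `f(x) g(y) k(x, y)` of the bilinear form of a real kernel `k`. -/
def kernelDensity (k : X × X → ℝ) (f g : X → ℝ) (z : X × X) : ℝ :=
  f z.1 * g z.2 * k z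

theorem kernelDensity_self_sub_sub (k : X × X → ℝ) (a b c : X → ℝ) :
    kernelDensity k a a - kernelDensity k b b - kernelDensity k c c =
      (kernelDensity k (a - b - c) a + kernelDensity k (b + c) (a - b - c)) +
        (kernelDensity k b c + kernelDensity k c b) := by
  ext z
  simp only [kernelDensity, Pi.sub_apply, Pi.add_apply]
  ring

variable [MeasurableSpace X] {μ : Measure X} {f g a b c : X → ℝ} {q : ℝ}

theorem eLpNorm_one_kernelDensity (k : X × X → ℝ) (f g : X → ℝ) :
    eLpNorm (kernelDensity k f g) 1 (μ.prod μ) =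
      kernelPairing μ (fun z => ‖k z‖ₑ) (fun x => ‖f x‖ₑ) (fun x => ‖g x‖ₑ) := by
  simp only [eLpNorm_one_eq_lintegral_enorm, kernelDensity, kernelPairing, enorm_mul]

theorem aestronglyMeasurable_kernelDensity (hk : AEStronglyMeasurable k (μ.prod μ))
    (hf : AEStronglyMeasurable f μ) (hg : AEStronglyMeasurable g μ) :
    AEStronglyMeasurable (kernelDensity k f g) (μ.prod μ) :=
  (hf.comp_fst.mul hg.comp_snd).mul hk

theorem HasBoundedPairing.integrable_kernelDensity (hK : HasBoundedPairing μ (fun z => ‖k z‖ₑ) q)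
    (hk : AEStronglyMeasurable k (μ.prod μ)) (hf : MemLp f (ENNReal.ofReal q) μ)
    (hg : MemLp g (ENNReal.ofReal q) μ) : Integrable (kernelDensity k f g) (μ.prod μ) := by
  obtain ⟨C, hC⟩ := hK
  rw [← memLp_one_iff_integrable]
  refine ⟨aestronglyMeasurable_kernelDensity hk hf.1 hg.1, ?_⟩
  rw [eLpNorm_one_kernelDensity]
  refine (hC _ _ hf.1.enorm hg.1.enorm).trans_lt ?_
  simpa only [eLpNorm_enorm] using
    ENNReal.mul_lt_top ENNReal.coe_lt_top (ENNReal.mul_lt_top hf.2 hg.2)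

theorem eLpNorm_kernelDensity_self_sub_sub_le (hk : AEStronglyMeasurable k (μ.prod μ))
    (ha : AEStronglyMeasurable a μ) (hb : AEStronglyMeasurable b μ)
    (hc : AEStronglyMeasurable c μ) :
    eLpNorm (kernelDensity k a a - kernelDensity k b b - kernelDensity k c c) 1 (μ.prod μ) ≤
      (eLpNorm (kernelDensity k (a - b - c) a) 1 (μ.prod μ) +
        eLpNorm (kernelDensity k (b + c) (a - b - c)) 1 (μ.prod μ)) +
      (eLpNorm (kernelDensity k b c) 1 (μ.prod μ) +
        eLpNorm (kernelDensity k c b) 1 (μ.prod μ)) := by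
  have hmeas {f g : X → ℝ} (hf : AEStronglyMeasurable f μ) (hg : AEStronglyMeasurable g μ) :=
    aestronglyMeasurable_kernelDensity hk hf hg
  have hda := hmeas ((ha.sub hb).sub hc) ha
  have hbcd := hmeas (hb.add hc) ((ha.sub hb).sub hc)
  rw [kernelDensity_self_sub_sub]
  refine (eLpNorm_add_le (hda.add hbcd) ((hmeas hb hc).add (hmeas hc hb)) le_rfl).trans ?_
  gcongr
  · exact eLpNorm_add_le hda hbcd le_rfl
  · exact eLpNorm_add_le (hmeas hb hc) (hmeas hc hb) le_rfl

end KernelDensity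

section BrezisLiebKernel

variable {X : Type*} [MeasurableSpace X] {μ : Measure X} [SigmaFinite μ] {k : X × X → ℝ}
  {q q' : ℝ} {a b : ℕ → X → ℝ} {c : X → ℝ} {M : ℝ≥0∞}

theorem HasBoundedPairing.tendsto_eLpNorm_kernelDensity_zero_of_ae_tendsto
    (hK : HasBoundedPairing μ (fun z => ‖k z‖ₑ) q) (hpq : q.HolderConjugate q')
    (hk : AEStronglyMeasurable k (μ.prod μ)) (hb : ∀ n, AEStronglyMeasurable (b n) μ)
    (hM : M ≠ ⊤) (hbM : ∀ n, eLpNorm (b n) (ENNReal.ofReal q) μ ≤ M)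
    (hc : MemLp c (ENNReal.ofReal q) μ)
    (hlim : ∀ᵐ x ∂μ, Tendsto (fun n => b n x) atTop (𝓝 0)) :
    Tendsto (fun n => eLpNorm (kernelDensity k (b n) c) 1 (μ.prod μ) +
      eLpNorm (kernelDensity k c (b n)) 1 (μ.prod μ)) atTop (𝓝 0) := by
  have hb_norm (n : ℕ) := (eLpNorm_enorm (b n)).trans_le (hbM n)
  have hc_norm := ((eLpNorm_enorm c).trans_lt hc.2).ne
  have hlim_enorm : ∀ᵐ x ∂μ, Tendsto (fun n => ‖b n x‖ₑ) atTop (𝓝 0) := by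
    filter_upwards [hlim] with x hx
    simpa using hx.enorm
  have hbc := hK.tendsto_zero_of_ae_tendsto hk.enorm hpq (fun n => (hb n).enorm) hc.1.enorm hM
    hb_norm hc_norm hlim_enorm
  have hcb := hK.comp_swap.tendsto_zero_of_ae_tendsto hk.prod_swap.enorm hpq
    (fun n => (hb n).enorm) hc.1.enorm hM hb_norm hc_norm hlim_enorm
  simpa only [kernelPairing_comp_swap, ← eLpNorm_one_kernelDensity, add_zero] using hbc.add hcb

theorem HasBoundedPairing.tendsto_eLpNorm_kernelDensity_sub_sub
    (hK : HasBoundedPairing μ (fun z => ‖k z‖ₑ) q) (hpq : q.HolderConjugate q')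
    (hk : AEStronglyMeasurable k (μ.prod μ)) (ha : ∀ n, AEStronglyMeasurable (a n) μ)
    (hb : ∀ n, AEStronglyMeasurable (b n) μ) (hM : M ≠ ⊤)
    (haM : ∀ n, eLpNorm (a n) (ENNReal.ofReal q) μ ≤ M)
    (hbM : ∀ n, eLpNorm (b n) (ENNReal.ofReal q) μ ≤ M)
    (hc : MemLp c (ENNReal.ofReal q) μ)
    (hsplit : Tendsto (fun n => eLpNorm (a n - b n - c) (ENNReal.ofReal q) μ) atTop (𝓝 0))
    (hlim : ∀ᵐ x ∂μ, Tendsto (fun n => b n x) atTop (𝓝 0)) :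
    Tendsto (fun n => eLpNorm (kernelDensity k (a n) (a n) - kernelDensity k (b n) (b n) -
      kernelDensity k c c) 1 (μ.prod μ)) atTop (𝓝 0) := by
  have hd (n : ℕ) : AEStronglyMeasurable (a n - b n - c) μ := ((ha n).sub (hb n)).sub hc.1
  have hd_lim := hsplit.congr fun n => (eLpNorm_enorm (a n - b n - c)).symm
  have hbcM (n : ℕ) : eLpNorm (b n + c) (ENNReal.ofReal q) μ ≤
      M + eLpNorm c (ENNReal.ofReal q) μ :=
    (eLpNorm_add_le (hb n) hc.1 (ENNReal.one_le_ofReal.2 hpq.lt.le)).trans (by gcongr; exact hbM n)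
  have hda := hK.tendsto_zero_of_tendsto_eLpNorm (fun n => (hd n).enorm) (fun n => (ha n).enorm)
    hM (fun n => (eLpNorm_enorm _).trans_le (haM n)) hd_lim
  have hbcd := hK.comp_swap.tendsto_zero_of_tendsto_eLpNorm (fun n => (hd n).enorm)
    (fun n => ((hb n).add hc.1).enorm) (ENNReal.add_ne_top.2 ⟨hM, hc.2.ne⟩)
    (fun n => (eLpNorm_enorm _).trans_le (hbcM n)) hd_lim
  simp only [kernelPairing_comp_swap, ← eLpNorm_one_kernelDensity] at hda hbcd
  have hcross := hK.tendsto_eLpNorm_kernelDensity_zero_of_ae_tendsto hpq hk hb hM hbM hc hlim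
  exact tendsto_of_tendsto_of_tendsto_of_le_of_le tendsto_const_nhds
    (by simpa using (hda.add hbcd).add hcross) (fun n => zero_le)
    fun n => eLpNorm_kernelDensity_self_sub_sub_le hk (ha n) (hb n) hc.1

end BrezisLiebKernel

section KernelEnergy

variable {X : Type*} [MeasurableSpace X] {μ : Measure X} [SigmaFinite μ] {k : X × X → ℝ}
  {q q' : ℝ}

/-- The quadratic form `∫∫ f(x) f(y) k(x, y) dy dx` of a real kernel `k`. -/
noncomputable def kernelEnergy (μ : Measure X) (k : X × X → ℝ) (f : X → ℝ) : ℝ :=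
  ∫ x, ∫ y, kernelDensity k f f (x, y) ∂μ ∂μ

theorem HasBoundedPairing.kernelEnergy_eq_integral_prod {f : X → ℝ}
    (hK : HasBoundedPairing μ (fun z => ‖k z‖ₑ) q) (hk : AEStronglyMeasurable k (μ.prod μ))
    (hf : MemLp f (ENNReal.ofReal q) μ) :
    kernelEnergy μ k f = ∫ z, kernelDensity k f f z ∂μ.prod μ :=
  (integral_prod _ (hK.integrable_kernelDensity hk hf hf)).symm

theorem HasBoundedPairing.tendsto_kernelEnergy_sub {a b : ℕ → X → ℝ} {c : X → ℝ}
    (hK : HasBoundedPairing μ (fun z => ‖k z‖ₑ) q) (hk : AEStronglyMeasurable k (μ.prod μ))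
    (ha : ∀ n, MemLp (a n) (ENNReal.ofReal q) μ) (hb : ∀ n, MemLp (b n) (ENNReal.ofReal q) μ)
    (hc : MemLp c (ENNReal.ofReal q) μ)
    (hlim : Tendsto (fun n => eLpNorm (kernelDensity k (a n) (a n) - kernelDensity k (b n) (b n) -
      kernelDensity k c c) 1 (μ.prod μ)) atTop (𝓝 0)) :
    Tendsto (fun n => kernelEnergy μ k (a n) - kernelEnergy μ k (b n)) atTop
      (𝓝 (kernelEnergy μ k c)) := by
  have hint {f : X → ℝ} (hf : MemLp f (ENNReal.ofReal q) μ) := hK.integrable_kernelDensity hk hf hf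
  rw [hK.kernelEnergy_eq_integral_prod hk hc]
  simp only [hK.kernelEnergy_eq_integral_prod hk (ha _),
    hK.kernelEnergy_eq_integral_prod hk (hb _), ← integral_sub (hint (ha _)) (hint (hb _))]
  exact tendsto_integral_of_L1' _ (hint hc).1
    (.of_forall fun n => (hint (ha n)).sub (hint (hb n))) hlim

theorem HasBoundedPairing.tendsto_kernelEnergy_norm_rpow_sub {F : Type*} [NormedAddCommGroup F]
    {u : ℕ → X → F} {u₀ : X → F} {p : ℝ} {M : ℝ≥0∞}
    (hK : HasBoundedPairing μ (fun z => ‖k z‖ₑ) q) (hpq : q.HolderConjugate q')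
    (hk : AEStronglyMeasurable k (μ.prod μ)) (hp : 0 < p)
    (hu : ∀ n, AEStronglyMeasurable (u n) μ) (hM : M ≠ ⊤)
    (huM : ∀ n, eLpNorm (u n) (ENNReal.ofReal q * ENNReal.ofReal p) μ ≤ M)
    (hlim : ∀ᵐ x ∂μ, Tendsto (fun n => u n x) atTop (𝓝 (u₀ x))) :
    Tendsto (fun n => kernelEnergy μ k (fun x => ‖u n x‖ ^ p) -
        kernelEnergy μ k (fun x => ‖u n x - u₀ x‖ ^ p)) atTop
      (𝓝 (kernelEnergy μ k (fun x => ‖u₀ x‖ ^ p))) := by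
  have hu₀ : AEStronglyMeasurable u₀ μ := aestronglyMeasurable_of_tendsto_ae _ hu hlim
  have hu₀M := eLpNorm_le_of_ae_tendsto hu huM hlim
  obtain ⟨M', hM', hsubM⟩ := exists_eLpNorm_sub_le_of_ae_tendsto hu hM huM hlim
  have hpow_le {v : X → F} {B : ℝ≥0∞}
      (hvB : eLpNorm v (ENNReal.ofReal q * ENNReal.ofReal p) μ ≤ B) :
      eLpNorm (fun x => ‖v x‖ ^ p) (ENNReal.ofReal q) μ ≤ B ^ p := by
    rw [eLpNorm_norm_rpow v hp]
    gcongr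
  have hpow_mem {v : X → F} {B : ℝ≥0∞} (hv : AEStronglyMeasurable v μ) (hB : B ≠ ⊤)
      (hvB : eLpNorm v (ENNReal.ofReal q * ENNReal.ofReal p) μ ≤ B) :
      MemLp (fun x => ‖v x‖ ^ p) (ENNReal.ofReal q) μ :=
    ⟨aestronglyMeasurable_norm_rpow hv p, (hpow_le hvB).trans_lt (by finiteness)⟩
  have ha (n : ℕ) := hpow_mem (hu n) hM (huM n)
  have hb (n : ℕ) := hpow_mem ((hu n).sub hu₀) hM' (hsubM n)
  have hc := hpow_mem hu₀ hM hu₀M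
  have hb_lim : ∀ᵐ x ∂μ, Tendsto (fun n => ‖u n x - u₀ x‖ ^ p) atTop (𝓝 0) := by
    filter_upwards [hlim] with x hx
    simpa [Real.zero_rpow hp.ne'] using (hx.sub_const (u₀ x)).norm.rpow_const (.inr hp.le)
  have hsplit := tendsto_eLpNorm_norm_rpow_sub hp (ENNReal.one_le_ofReal.2 hpq.lt.le)
    ENNReal.ofReal_ne_top hu (M := M' ^ p) (by finiteness) (fun n => hpow_le (hsubM n)) hc.2.ne hlim
  refine hK.tendsto_kernelEnergy_sub hk ha hb hc ?_
  exact hK.tendsto_eLpNorm_kernelDensity_sub_sub hpq hk (fun n => (ha n).1) (fun n => (hb n).1)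
    (M := max (M ^ p) (M' ^ p)) (by finiteness) (fun n => (hpow_le (huM n)).trans (le_max_left _ _))
    (fun n => (hpow_le (hsubM n)).trans (le_max_right _ _)) hc hsplit hb_lim

end KernelEnergy

section SelfPairing

variable {X : Type*} [MeasurableSpace X] {μ : Measure X} {K : X × X → ℝ≥0∞} {q q' : ℝ}

theorem lintegral_min_mul_le (hpq : q.HolderConjugate q') {s : Set X} (hs : MeasurableSet s)
    {g k : X → ℝ≥0∞} (hg : AEMeasurable g μ) (hk : AEMeasurable k μ) (t : ℝ≥0∞) :
    ∫⁻ x, min t (g x) * k x ∂μ ≤ t * eLpNorm k 1 (μ.restrict s) +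
      eLpNorm g (ENNReal.ofReal q) μ * eLpNorm k (ENNReal.ofReal q') (μ.restrict sᶜ) := by
  rw [← lintegral_add_compl _ hs]
  gcongr ?_ + ?_
  · calc ∫⁻ x in s, min t (g x) * k x ∂μ ≤ ∫⁻ x in s, t * k x ∂μ := by
          gcongr
          exact min_le_left _ _
      _ = t * eLpNorm k 1 (μ.restrict s) := by
          rw [lintegral_const_mul'' _ hk.restrict, eLpNorm_one_eq_lintegral_enorm]
          simp only [enorm_eq_self]
  · calc ∫⁻ x in sᶜ, min t (g x) * k x ∂μ ≤ ∫⁻ x in sᶜ, g x * k x ∂μ := by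
          gcongr
          exact min_le_right _ _
      _ ≤ eLpNorm g (ENNReal.ofReal q) (μ.restrict sᶜ) *
          eLpNorm k (ENNReal.ofReal q') (μ.restrict sᶜ) := by
          rw [eLpNorm_ofReal_eq_lintegral hpq.pos, eLpNorm_ofReal_eq_lintegral hpq.symm.pos]
          exact ENNReal.lintegral_mul_le_Lp_mul_Lq _ hpq hg.restrict hk.restrict
      _ ≤ _ := by
          gcongr
          exact Measure.restrict_le_self

theorem kernelPairing_smul_smul {f g : X → ℝ≥0∞} {a b : ℝ≥0∞} (ha : a ≠ ⊤) (hb : b ≠ ⊤) :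
    kernelPairing μ K (a • f) (b • g) = a * b * kernelPairing μ K f g := by
  rw [kernelPairing, kernelPairing, ← lintegral_const_mul' _ _ (ENNReal.mul_ne_top ha hb)]
  simp only [Pi.smul_apply, smul_eq_mul, mul_assoc, mul_left_comm (f _) b]

theorem kernelPairing_mono {f₁ f₂ g₁ g₂ : X → ℝ≥0∞} (hf : f₁ ≤ f₂) (hg : g₁ ≤ g₂) :
    kernelPairing μ K f₁ g₁ ≤ kernelPairing μ K f₂ g₂ := by
  unfold kernelPairing
  gcongr
  exacts [hf _, hg _]

theorem kernelPairing_eq_zero_of_left {f g : X → ℝ≥0∞} (hf : f =ᵐ[μ] 0) :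
    kernelPairing μ K f g = 0 := by
  have hfst : ∀ᵐ z ∂μ.prod μ, f z.1 = 0 := Measure.quasiMeasurePreserving_fst.ae hf
  refine lintegral_eq_zero_of_ae_eq_zero ?_
  filter_upwards [hfst] with z hz
  simp [hz]

theorem kernelPairing_le_of_forall_self {f g : X → ℝ≥0∞} {C : ℝ≥0∞} (hq : 1 ≤ q)
    (hC : ∀ h : X → ℝ≥0∞, AEMeasurable h μ → eLpNorm h (ENNReal.ofReal q) μ ≤ 1 →
      kernelPairing μ K h h ≤ C)
    (hf : AEMeasurable f μ) (hg : AEMeasurable g μ) (hf_le : eLpNorm f (ENNReal.ofReal q) μ ≤ 2⁻¹)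
    (hg_le : eLpNorm g (ENNReal.ofReal q) μ ≤ 2⁻¹) : kernelPairing μ K f g ≤ C := by
  have hsum : eLpNorm (f + g) (ENNReal.ofReal q) μ ≤ 1 := by
    rw [← ENNReal.inv_two_add_inv_two]
    exact (eLpNorm_add_le hf.aestronglyMeasurable hg.aestronglyMeasurable
      (ENNReal.one_le_ofReal.2 hq)).trans (add_le_add hf_le hg_le)
  exact (kernelPairing_mono le_self_add le_add_self).trans (hC _ (hf.add hg) hsum)

variable [SigmaFinite μ]

theorem kernelPairing_eq_zero_of_right {f g : X → ℝ≥0∞} (hg : g =ᵐ[μ] 0) :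
    kernelPairing μ K f g = 0 := by
  rw [← kernelPairing_comp_swap, kernelPairing_eq_zero_of_left hg]

theorem kernelPairing_self_le_two_mul (hK : AEMeasurable K (μ.prod μ)) (hK_symm : K ∘ Prod.swap = K)
    {f : X → ℝ≥0∞} (hf : AEMeasurable f μ) :
    kernelPairing μ K f f ≤ 2 * ∫⁻ x, f x * ∫⁻ y, min (f x) (f y) * K (x, y) ∂μ ∂μ := by
  set A : X × X → ℝ≥0∞ := fun z => f z.1 * (min (f z.1) (f z.2) * K z)
  have hA : AEMeasurable A (μ.prod μ) :=
    hf.comp_fst.mul ((hf.comp_fst.inf hf.comp_snd).mul hK)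
  have hle (z : X × X) : f z.1 * f z.2 * K z ≤ A z + A z.swap := by
    have hKz : K z.swap = K z := congrFun hK_symm z
    rcases le_total (f z.1) (f z.2) with hz | hz
    · refine le_add_left (le_of_eq ?_)
      simp only [A, hKz, Prod.fst_swap, Prod.snd_swap, min_eq_right hz]
      ring
    · refine le_add_right (le_of_eq ?_)
      simp only [A, min_eq_right hz, mul_assoc]
  have hsection : ∀ᵐ x ∂μ, AEMeasurable (fun y => min (f x) (f y) * K (x, y)) μ := by
    filter_upwards [hK.aestronglyMeasurable.prodMk_left] with x hx
    exact (aemeasurable_const.inf hf).mul hx.aemeasurable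
  calc kernelPairing μ K f f ≤ ∫⁻ z, A z + A z.swap ∂μ.prod μ := lintegral_mono hle
    _ = 2 * ∫⁻ z, A z ∂μ.prod μ := by
        rw [lintegral_add_left' hA, lintegral_prod_swap, two_mul]
    _ = _ := by
        rw [lintegral_prod _ hA]
        congr 1
        refine lintegral_congr_ae ?_
        filter_upwards [hsection] with x hx
        exact lintegral_const_mul'' (f x) hx

theorem hasBoundedPairing_of_forall_self (hq : 1 ≤ q) {C : ℝ≥0}
    (hC : ∀ f : X → ℝ≥0∞, AEMeasurable f μ → eLpNorm f (ENNReal.ofReal q) μ ≤ 1 →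
      kernelPairing μ K f f ≤ C) : HasBoundedPairing μ K q := by
  have hq0 : ENNReal.ofReal q ≠ 0 := by simpa using one_pos.trans_le hq
  refine ⟨4 * C + 1, fun f g hf hg => ?_⟩
  set A := eLpNorm f (ENNReal.ofReal q) μ
  set B := eLpNorm g (ENNReal.ofReal q) μ
  rcases eq_or_ne A 0 with hA0 | hA0
  · simp [kernelPairing_eq_zero_of_left ((eLpNorm_eq_zero_iff hf.aestronglyMeasurable hq0).1 hA0)]
  rcases eq_or_ne B 0 with hB0 | hB0
  · simp [kernelPairing_eq_zero_of_right ((eLpNorm_eq_zero_iff hg.aestronglyMeasurable hq0).1 hB0)]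
  rcases eq_or_ne A ⊤ with hA | hA
  · simp [hA, hB0]
  rcases eq_or_ne B ⊤ with hB | hB
  · simp [hB, hA0]
  have hinv {S : ℝ≥0∞} (hS0 : S ≠ 0) (hS : S ≠ ⊤) : (2 * S)⁻¹ * S = 2⁻¹ := by
    rw [ENNReal.mul_inv (by simp) (by simp), mul_assoc, ENNReal.inv_mul_cancel hS0 hS, mul_one]
  have ha : (2 * A)⁻¹ ≠ ⊤ := by simp [hA0]
  have hb : (2 * B)⁻¹ ≠ ⊤ := by simp [hB0]
  have hnormalized : kernelPairing μ K ((2 * A)⁻¹ • f) ((2 * B)⁻¹ • g) ≤ C :=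
    kernelPairing_le_of_forall_self hq hC (hf.const_mul _) (hg.const_mul _)
      ((eLpNorm_ennreal_smul_le ha f).trans_eq (hinv hA0 hA))
      ((eLpNorm_ennreal_smul_le hb g).trans_eq (hinv hB0 hB))
  rw [kernelPairing_smul_smul ha hb, ← ENNReal.mul_inv (by simp [hA0]) (by simp [hB0]), mul_comm,
    ← div_eq_mul_inv, ENNReal.div_le_iff (by simp [hA0, hB0]) (by finiteness)] at hnormalized
  calc kernelPairing μ K f g ≤ C * (2 * A * (2 * B)) := hnormalized
    _ = 4 * C * (A * B) := by ring
    _ ≤ (4 * C + 1 : ℝ≥0) * (A * B) := by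
        push_cast
        gcongr
        exact le_self_add

end SelfPairing

section Scaling

variable {E : Type*} [NormedAddCommGroup E] [NormedSpace ℝ E] [FiniteDimensional ℝ E]
  [MeasurableSpace E] [BorelSpace E] (μ : Measure E) [μ.IsAddHaarMeasure]

open Module (finrank)

theorem eLpNorm_restrict_smul_set_of_homogeneous {h : E → ℝ} {β r R : ℝ} (hr : 0 < r) (hR : 0 < R)
    (hh : ∀ z, h (R • z) = R ^ β * h z) (s : Set E) :
    eLpNorm h (ENNReal.ofReal r) (μ.restrict (R • s)) =
      ENNReal.ofReal R ^ (finrank ℝ E / r + β) * eLpNorm h (ENNReal.ofReal r) (μ.restrict s) := by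
  have hR0 : ENNReal.ofReal R ≠ 0 := by simpa using hR
  have hemb : MeasurableEmbedding (R • · : E → E) :=
    (Homeomorph.smulOfNeZero R hR.ne').measurableEmbedding
  have hμ : μ.restrict (R • s) =
      ENNReal.ofReal R ^ (finrank ℝ E : ℝ) • (μ.restrict s).map (R • ·) := by
    have hpre : (R • · : E → E) ⁻¹' (R • s) = s := Set.preimage_image_eq s hemb.injective
    have hscale : ENNReal.ofReal R ^ (finrank ℝ E : ℝ) * ENNReal.ofReal |(R ^ finrank ℝ E)⁻¹| =
        1 := by
      rw [ENNReal.rpow_natCast, ← ENNReal.ofReal_pow hR.le, ← ENNReal.ofReal_mul (by positivity),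
        abs_of_pos (by positivity), mul_inv_cancel₀ (by positivity), ENNReal.ofReal_one]
    nth_rw 2 [← hpre]
    rw [← hemb.restrict_map, Measure.map_addHaar_smul μ hR.ne', Measure.restrict_smul, smul_smul,
      hscale, one_smul]
  have hcomp : h ∘ (R • ·) = R ^ β • h := funext hh
  rw [hμ, eLpNorm_smul_measure_of_ne_top ENNReal.ofReal_ne_top, hemb.eLpNorm_map_measure, hcomp,
    eLpNorm_const_smul, ENNReal.rpow_add _ _ hR0 ENNReal.ofReal_ne_top, smul_eq_mul, ← mul_assoc,
    ← ENNReal.rpow_mul, Real.enorm_of_nonneg (by positivity), ← ENNReal.ofReal_rpow_of_pos hR,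
    ENNReal.toReal_div, ENNReal.toReal_ofReal hr.le, ENNReal.toReal_one, mul_one_div]

theorem integrableOn_compl_ball_norm_rpow_neg {s : ℝ} (hs : finrank ℝ E < s) :
    IntegrableOn (fun z : E => ‖z‖ ^ (-s)) (Metric.ball 0 1)ᶜ μ := by
  have hs0 : 0 ≤ s := (Nat.cast_nonneg _).trans hs.le
  refine ((integrable_one_add_norm hs).const_mul (2 ^ s)).integrableOn.mono'
    (measurable_norm.pow_const _).aestronglyMeasurable
    (ae_restrict_of_forall_mem measurableSet_ball.compl fun z hz => ?_)
  have hz1 : 1 ≤ ‖z‖ := by simpa using hz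
  have hz0 : 0 < ‖z‖ := one_pos.trans_le hz1
  rw [Real.norm_of_nonneg (by positivity), Real.rpow_neg hz0.le, Real.rpow_neg (by positivity),
    ← div_eq_mul_inv, inv_eq_one_div, div_le_div_iff₀ (by positivity) (by positivity), one_mul,
    ← Real.mul_rpow zero_le_two hz0.le]
  gcongr
  linarith

end Scaling

section HardyLittlewoodSobolev

open Module (finrank)

variable {E : Type*} [NormedAddCommGroup E] [NormedSpace ℝ E] {α : ℝ}

theorem holderConjugate_two_mul_div {d : ℝ} (hα : α ∈ Set.Ioo 0 d) :
    (2 * d / (d + α)).HolderConjugate (2 * d / (d - α)) := by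
  obtain ⟨hα0, hαd⟩ := hα
  have hd : 0 < d := hα0.trans hαd
  have : 0 < d - α := sub_pos.2 hαd
  rw [Real.holderConjugate_iff, lt_div_iff₀ (by positivity)]
  refine ⟨by linarith, ?_⟩
  field_simp
  ring

/-- The Riesz kernel `‖z‖ ^ (α - d)` of order `α`, where `d = dim E`, without its normalizing
constant. -/
noncomputable def rieszKernel (α : ℝ) (z : E) : ℝ :=
  ‖z‖ ^ (α - finrank ℝ E)

theorem rieszKernel_smul {R : ℝ} (hR : 0 < R) (z : E) :
    rieszKernel α (R • z) = R ^ (α - finrank ℝ E) * rieszKernel α z := by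
  rw [rieszKernel, norm_smul, Real.norm_of_nonneg hR.le, Real.mul_rpow hR.le (norm_nonneg z),
    rieszKernel]

theorem rieszKernel_sub_comm (x y : E) : rieszKernel α (x - y) = rieszKernel α (y - x) := by
  rw [rieszKernel, norm_sub_rev, rieszKernel]

variable [MeasurableSpace E] [BorelSpace E]

theorem measurable_rieszKernel : Measurable (rieszKernel α : E → ℝ) :=
  measurable_norm.pow_const _

variable [FiniteDimensional ℝ E] (μ : Measure E) [μ.IsAddHaarMeasure]

theorem measurable_rieszKernel_sub : Measurable fun z : E × E => rieszKernel α (z.1 - z.2) :=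
  measurable_rieszKernel.comp (measurable_fst.sub measurable_snd)

theorem eLpNorm_rieszKernel_ball_ne_top (hα : α ∈ Set.Ioo 0 (finrank ℝ E : ℝ)) :
    eLpNorm (rieszKernel α) 1 (μ.restrict (Metric.ball (0 : E) 1)) ≠ ⊤ := by
  have hint : IntegrableOn (rieszKernel α) (Metric.ball (0 : E) 1) μ := by
    refine integrableOn_ball_of_norm_le_rpow (C := 1) (α := finrank ℝ E - α)
      (by exact_mod_cast hα.1.trans hα.2) (by linarith [hα.1]) (ae_of_all _ fun z => ?_)
      measurable_rieszKernel.aestronglyMeasurable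
    rw [rieszKernel, Real.norm_of_nonneg (by positivity), one_mul, neg_sub]
  exact (memLp_one_iff_integrable.2 hint).2.ne

theorem eLpNorm_rieszKernel_compl_ball_ne_top {r : ℝ} (hr : 0 < r)
    (hαr : finrank ℝ E < (finrank ℝ E - α) * r) :
    eLpNorm (rieszKernel α) (ENNReal.ofReal r) (μ.restrict (Metric.ball (0 : E) 1)ᶜ) ≠ ⊤ := by
  refine ((integrable_norm_rpow_iff measurable_rieszKernel.aestronglyMeasurable (by simpa)
    ENNReal.ofReal_ne_top).1 ?_).2.ne
  refine (integrableOn_compl_ball_norm_rpow_neg μ hαr).congr (ae_of_all _ fun z => ?_)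
  simp only [rieszKernel]
  rw [ENNReal.toReal_ofReal hr.le, Real.norm_of_nonneg (by positivity),
    ← Real.rpow_mul (norm_nonneg z), ← neg_mul, neg_sub]

theorem lintegral_min_mul_rieszKernel_le (hα : α ∈ Set.Ioo 0 (finrank ℝ E : ℝ)) {R : ℝ}
    (hR : 0 < R) {g : E → ℝ≥0∞} (hg : AEMeasurable g μ) (t : ℝ≥0∞) :
    ∫⁻ z, min t (g z) * ‖rieszKernel α z‖ₑ ∂μ ≤
      t * (ENNReal.ofReal R ^ α * eLpNorm (rieszKernel α) 1 (μ.restrict (Metric.ball 0 1))) +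
      eLpNorm g (ENNReal.ofReal (2 * finrank ℝ E / (finrank ℝ E + α))) μ *
        (ENNReal.ofReal R ^ ((α - finrank ℝ E) / 2) *
          eLpNorm (rieszKernel α) (ENNReal.ofReal (2 * finrank ℝ E / (finrank ℝ E - α)))
            (μ.restrict (Metric.ball 0 1)ᶜ)) := by
  have hpq := holderConjugate_two_mul_div hα
  have hd : (finrank ℝ E : ℝ) ≠ 0 := (hα.1.trans hα.2).ne'
  have : (finrank ℝ E : ℝ) - α ≠ 0 := (sub_pos.2 hα.2).ne'
  have hnear := eLpNorm_restrict_smul_set_of_homogeneous μ one_pos hR (rieszKernel_smul (α := α) hR)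
    (Metric.ball 0 1)
  have hfar := eLpNorm_restrict_smul_set_of_homogeneous μ hpq.symm.pos hR
    (rieszKernel_smul (α := α) hR) (Metric.ball 0 1)ᶜ
  rw [ENNReal.ofReal_one, show finrank ℝ E / 1 + (α - finrank ℝ E) = α by ring] at hnear
  rw [show finrank ℝ E / (2 * finrank ℝ E / (finrank ℝ E - α)) + (α - finrank ℝ E) =
    (α - finrank ℝ E) / 2 by field_simp; ring] at hfar
  have hcompl : R • (Metric.ball (0 : E) 1)ᶜ = (R • Metric.ball (0 : E) 1)ᶜ :=
    Set.image_compl_eq (MulAction.bijective₀ hR.ne')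
  rw [← hnear, ← hfar, hcompl, smul_unitBall_of_pos hR]
  simpa only [eLpNorm_enorm] using
    lintegral_min_mul_le hpq measurableSet_ball hg measurable_rieszKernel.enorm.aemeasurable t

theorem mul_lintegral_min_mul_rieszKernel_le (hα : α ∈ Set.Ioo 0 (finrank ℝ E : ℝ))
    {g : E → ℝ≥0∞} (hg : AEMeasurable g μ) {t : ℝ≥0∞} (ht0 : t ≠ 0) (ht : t ≠ ⊤) :
    t * ∫⁻ z, min t (g z) * ‖rieszKernel α z‖ₑ ∂μ ≤
      t ^ (2 * finrank ℝ E / (finrank ℝ E + α)) *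
        (eLpNorm (rieszKernel α) 1 (μ.restrict (Metric.ball 0 1)) +
          eLpNorm g (ENNReal.ofReal (2 * finrank ℝ E / (finrank ℝ E + α))) μ *
            eLpNorm (rieszKernel α) (ENNReal.ofReal (2 * finrank ℝ E / (finrank ℝ E - α)))
              (μ.restrict (Metric.ball 0 1)ᶜ)) := by
  have hd_add : (finrank ℝ E : ℝ) + α ≠ 0 := (add_pos (hα.1.trans hα.2) hα.1).ne'
  have ht_pos : 0 < t.toReal := ENNReal.toReal_pos ht0 ht
  -- This radius balances the contributions of the ball and of its complement.
  have hbound := lintegral_min_mul_rieszKernel_le μ hα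
    (Real.rpow_pos_of_pos ht_pos (-2 / (finrank ℝ E + α))) hg t
  rw [← ENNReal.ofReal_rpow_of_pos ht_pos, ENNReal.ofReal_toReal ht, ← ENNReal.rpow_mul,
    ← ENNReal.rpow_mul] at hbound
  have hnear : t * t * t ^ (-2 / (finrank ℝ E + α) * α) =
      t ^ (2 * finrank ℝ E / (finrank ℝ E + α)) := by
    rw [← sq, ← ENNReal.rpow_two, ← ENNReal.rpow_add _ _ ht0 ht]
    congr 1
    field_simp
    ring
  have hfar : t * t ^ (-2 / (finrank ℝ E + α) * ((α - finrank ℝ E) / 2)) =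
      t ^ (2 * finrank ℝ E / (finrank ℝ E + α)) := by
    nth_rw 1 [← ENNReal.rpow_one t]
    rw [← ENNReal.rpow_add _ _ ht0 ht]
    congr 1
    field_simp
    ring
  refine (mul_le_mul_right hbound t).trans_eq ?_
  rw [mul_add, mul_add]
  congr 1
  · rw [← hnear]
    ring
  · rw [← hfar]
    ring

theorem exists_mul_lintegral_min_mul_rieszKernel_le (hα : α ∈ Set.Ioo 0 (finrank ℝ E : ℝ)) :
    ∃ C : ℝ≥0, ∀ (g : E → ℝ≥0∞) (t : ℝ≥0∞), AEMeasurable g μ →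
      t * ∫⁻ z, min t (g z) * ‖rieszKernel α z‖ₑ ∂μ ≤
        t ^ (2 * finrank ℝ E / (finrank ℝ E + α)) *
          (C * (1 + eLpNorm g (ENNReal.ofReal (2 * finrank ℝ E / (finrank ℝ E + α))) μ)) := by
  have hpq := holderConjugate_two_mul_div hα
  obtain ⟨c₁, hc₁⟩ := WithTop.ne_top_iff_exists.1 (eLpNorm_rieszKernel_ball_ne_top μ hα)
  obtain ⟨c₂, hc₂⟩ := WithTop.ne_top_iff_exists.1 <|
    eLpNorm_rieszKernel_compl_ball_ne_top μ (α := α) hpq.symm.pos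
      (by rw [mul_div_cancel₀ _ (sub_pos.2 hα.2).ne']; linarith [hα.1, hα.2])
  refine ⟨c₁ + c₂ + 1, fun g t hg => ?_⟩
  rcases eq_or_ne t 0 with rfl | ht0
  · simp
  rcases eq_or_ne t ⊤ with rfl | ht
  · simp [hpq.pos]
  refine (mul_lintegral_min_mul_rieszKernel_le μ hα hg ht0 ht).trans ?_
  rw [← hc₁, ← hc₂]
  gcongr
  generalize eLpNorm g _ μ = S
  calc (c₁ : ℝ≥0∞) + S * c₂ ≤ c₁ + S * c₂ + (c₂ + 1 + (c₁ + 1) * S) := le_self_add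
    _ = (c₁ + c₂ + 1 : ℝ≥0) * (1 + S) := by push_cast; ring

theorem exists_mul_lintegral_min_mul_rieszKernel_sub_le
    (hα : α ∈ Set.Ioo 0 (finrank ℝ E : ℝ)) :
    ∃ C : ℝ≥0, ∀ f : E → ℝ≥0∞, AEMeasurable f μ →
      eLpNorm f (ENNReal.ofReal (2 * finrank ℝ E / (finrank ℝ E + α))) μ ≤ 1 →
      ∀ x, f x * ∫⁻ y, min (f x) (f y) * ‖rieszKernel α (x - y)‖ₑ ∂μ ≤
        f x ^ (2 * finrank ℝ E / (finrank ℝ E + α)) * C := by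
  obtain ⟨C, hC⟩ := exists_mul_lintegral_min_mul_rieszKernel_le μ hα
  refine ⟨C * 2, fun f hf hf_le x => ?_⟩
  have hreflect := μ.measurePreserving_sub_left x
  have hchange : ∫⁻ y, min (f x) (f y) * ‖rieszKernel α (x - y)‖ₑ ∂μ =
      ∫⁻ z, min (f x) (f (x - z)) * ‖rieszKernel α z‖ₑ ∂μ := by
    rw [← lintegral_sub_left_eq_self (fun z => min (f x) (f (x - z)) * ‖rieszKernel α z‖ₑ) x]
    simp only [sub_sub_cancel]
  have hnorm : eLpNorm (fun z => f (x - z))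
      (ENNReal.ofReal (2 * finrank ℝ E / (finrank ℝ E + α))) μ ≤ 1 :=
    (eLpNorm_comp_measurePreserving hf.aestronglyMeasurable hreflect).trans_le hf_le
  rw [hchange]
  refine (hC (fun z => f (x - z)) (f x)
    (hf.comp_quasiMeasurePreserving hreflect.quasiMeasurePreserving)).trans ?_
  rw [ENNReal.coe_mul, ENNReal.coe_ofNat]
  grw [hnorm, one_add_one_eq_two]

theorem hasBoundedPairing_rieszKernel (hα : α ∈ Set.Ioo 0 (finrank ℝ E : ℝ)) :
    HasBoundedPairing μ (fun z => ‖rieszKernel α (z.1 - z.2)‖ₑ)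
      (2 * finrank ℝ E / (finrank ℝ E + α)) := by
  have hpq := holderConjugate_two_mul_div hα
  obtain ⟨C, hC⟩ := exists_mul_lintegral_min_mul_rieszKernel_sub_le μ hα
  have hsymm : (fun z : E × E => ‖rieszKernel α (z.1 - z.2)‖ₑ) ∘ Prod.swap =
      fun z => ‖rieszKernel α (z.1 - z.2)‖ₑ := by
    ext z
    simp only [Function.comp_apply, Prod.fst_swap, Prod.snd_swap, rieszKernel_sub_comm z.2]
  refine hasBoundedPairing_of_forall_self (C := 2 * C) hpq.lt.le fun f hf hf_le => ?_
  have hf_int : ∫⁻ x, f x ^ (2 * finrank ℝ E / (finrank ℝ E + α)) ∂μ ≤ 1 := by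
    rwa [eLpNorm_ofReal_eq_lintegral hpq.pos, one_div, ENNReal.rpow_inv_le_iff hpq.pos,
      ENNReal.one_rpow] at hf_le
  calc kernelPairing μ (fun z => ‖rieszKernel α (z.1 - z.2)‖ₑ) f f
      ≤ 2 * ∫⁻ x, f x * ∫⁻ y, min (f x) (f y) * ‖rieszKernel α (x - y)‖ₑ ∂μ ∂μ :=
        kernelPairing_self_le_two_mul measurable_rieszKernel_sub.enorm.aemeasurable hsymm hf
    _ ≤ 2 * ∫⁻ x, f x ^ (2 * finrank ℝ E / (finrank ℝ E + α)) * C ∂μ :=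
        mul_le_mul_right (lintegral_mono (hC f hf hf_le)) 2
    _ ≤ 2 * (1 * C) := by
        rw [lintegral_mul_const' _ _ ENNReal.coe_ne_top]
        gcongr
    _ = (2 * C : ℝ≥0) := by push_cast; ring

end HardyLittlewoodSobolev

section RieszEnergy

open Module (finrank)

variable {E : Type*} [NormedAddCommGroup E] [NormedSpace ℝ E] [MeasurableSpace E]
  {F : Type*} [NormedAddCommGroup F]

/-- The Riesz potential energy `∫∫ ‖u(x)‖ ^ p ‖u(y)‖ ^ p ‖x - y‖ ^ (α - d) dy dx` of a
vector-valued function, without the normalizing constant of the Riesz potential. -/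
noncomputable def rieszEnergy (μ : Measure E) (α p : ℝ) (u : E → F) : ℝ :=
  kernelEnergy μ (fun z => rieszKernel α (z.1 - z.2)) (fun x => ‖u x‖ ^ p)

theorem nonlocalB_eq_const_mul_rieszEnergy (N : ℕ) (α p : ℝ) (u : EuclideanSpace ℝ (Fin N) → ℝ) :
    nonlocalB N α p u = rieszConst N α * rieszEnergy volume α p u := by
  simp only [nonlocalB, rieszEnergy, kernelEnergy, kernelDensity, rieszKernel,
    finrank_euclideanSpace_fin, Real.norm_eq_abs, ← integral_const_mul, mul_assoc]

theorem stmt_13_general [BorelSpace E] [FiniteDimensional ℝ E] (μ : Measure E)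
    [μ.IsAddHaarMeasure] {α p : ℝ} (hα : α ∈ Set.Ioo 0 (finrank ℝ E : ℝ)) (hp : 0 < p)
    {u : ℕ → E → F} {u₀ : E → F} (hu : ∀ n, AEStronglyMeasurable (u n) μ) {M : ℝ≥0∞} (hM : M ≠ ⊤)
    (huM : ∀ n,
      eLpNorm (u n) (ENNReal.ofReal (2 * finrank ℝ E * p / (finrank ℝ E + α))) μ ≤ M)
    (hlim : ∀ᵐ x ∂μ, Tendsto (fun n => u n x) atTop (𝓝 (u₀ x))) :
    Tendsto (fun n => rieszEnergy μ α p (u n) - rieszEnergy μ α p (fun x => u n x - u₀ x)) atTop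
      (𝓝 (rieszEnergy μ α p u₀)) := by
  have hpq := holderConjugate_two_mul_div hα
  refine (hasBoundedPairing_rieszKernel μ hα).tendsto_kernelEnergy_norm_rpow_sub hpq
    measurable_rieszKernel_sub.aestronglyMeasurable hp hu hM (fun n => ?_) hlim
  rw [← ENNReal.ofReal_mul hpq.nonneg, div_mul_eq_mul_div]
  exact huM n

end RieszEnergy

/-- the Brezis–Lieb lemma for the Riesz potential energy. -/
theorem stmt_13 (N : ℕ) (hN : 3 ≤ N) (α : ℝ) (hα : α ∈ Set.Ioo (0:ℝ) N)
    (p : ℝ) (hp : p ∈ Set.Icc (1:ℝ) (((N:ℝ) + α) / ((N:ℝ) - 2)))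
    (u : ℕ → EuclideanSpace ℝ (Fin N) → ℝ) (u₀ : EuclideanSpace ℝ (Fin N) → ℝ)
    (hmeas : ∀ n, AEStronglyMeasurable (u n) volume)
    (hbdd : ∃ M : ENNReal, M < ⊤ ∧ ∀ n,
      eLpNorm (u n) (ENNReal.ofReal (2 * (N:ℝ) * p / ((N:ℝ) + α))) volume ≤ M)
    (hae : ∀ᵐ x : EuclideanSpace ℝ (Fin N) ∂volume,
      Tendsto (fun n => u n x) atTop (nhds (u₀ x))) :
    Tendsto (fun n => nonlocalB N α p (u n) -
        nonlocalB N α p (fun x => u n x - u₀ x)) atTop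
      (nhds (nonlocalB N α p u₀)) := by
  obtain ⟨M, hM, huM⟩ := hbdd
  simp only [nonlocalB_eq_const_mul_rieszEnergy, ← mul_sub]
  exact (stmt_13_general volume (by simpa using hα) (one_pos.trans_le hp.1) hmeas hM.ne
    (by simpa using huM) hae).const_mul _
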